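/- arXiv:2205.09386 — 3 statements merged into one kernel-verified Lean document; each statement's English description precedes it below -/
import Mathlib

section
/- Fix a real number σ ≥ 3 and an integer n ≥ 3, and place four candidates on the real line at y_1 = −σ+2, y_2 = 0, y_3 = 1, y_4 = 2 (so the ratio of the maximum to the minimum pairwise candidate distance equals σ). Then every strategy-proof randomized two-winner scv mechanism f for these four candidates and n voters has distortion at least (1/12)·min{n, √σ} on this candidate configuration. -/
open Finset

/-- Cost of a point `z` when the pair of candidates `(y k, y l)` is elected:
the distance to the closer of the two winners. -/
noncomputable def pairCost {α : Type*} [PseudoMetricSpace α] {m : ℕ}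
    (y : Fin m → α) (k l : Fin m) (z : α) : ℝ :=
  min (dist z (y k)) (dist z (y l))

/-- Social cost of the pair `(y k, y l)` on the location profile `x`. -/
noncomputable def socialCost {α : Type*} [PseudoMetricSpace α] {m n : ℕ}
    (y : Fin m → α) (k l : Fin m) (x : Fin n → α) : ℝ :=
  ∑ i, pairCost y k l (x i)

/-- Optimal social cost over all pairs of distinct candidates. -/
noncomputable def OPT {α : Type*} [PseudoMetricSpace α] {m n : ℕ}
    (y : Fin m → α) (x : Fin n → α) : ℝ :=
  sInf {c : ℝ | ∃ k l : Fin m, k ≠ l ∧ c = socialCost y k l x}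

/-- A location profile `x` is consistent with an action profile `a` if every
voter votes for (one of) her nearest candidate(s). -/
def Consistent {α : Type*} [PseudoMetricSpace α] {m n : ℕ}
    (y : Fin m → α) (a : Fin n → Fin m) (x : Fin n → α) : Prop :=
  ∀ (i : Fin n) (k : Fin m), dist (x i) (y (a i)) ≤ dist (x i) (y k)

/-- `f` is a randomized two-winner mechanism: on every action profile it gives a
probability distribution over unordered pairs of distinct candidates
(represented by a symmetric nonnegative function vanishing on the diagonal whose
values over the pairs `k < l` sum to one). -/
def IsRandMech {m n : ℕ} (f : (Fin n → Fin m) → Fin m → Fin m → ℝ) : Prop :=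
  ∀ a : Fin n → Fin m, (∀ k l, 0 ≤ f a k l) ∧ (∀ k l, f a k l = f a l k) ∧
    (∀ k, f a k k = 0) ∧
    ∑ p ∈ univ.filter (fun p : Fin m × Fin m => p.1 < p.2), f a p.1 p.2 = 1

/-- Expected cost of the point `z` under the lottery `f a`. -/
noncomputable def expCost {α : Type*} [PseudoMetricSpace α] {m n : ℕ}
    (y : Fin m → α) (f : (Fin n → Fin m) → Fin m → Fin m → ℝ)
    (a : Fin n → Fin m) (z : α) : ℝ :=
  ∑ p ∈ univ.filter (fun p : Fin m × Fin m => p.1 < p.2),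
    f a p.1 p.2 * pairCost y p.1 p.2 z

/-- Expected social cost of the randomized mechanism `f` on action profile `a`
and location profile `x`. -/
noncomputable def expSC {α : Type*} [PseudoMetricSpace α] {m n : ℕ}
    (y : Fin m → α) (f : (Fin n → Fin m) → Fin m → Fin m → ℝ)
    (a : Fin n → Fin m) (x : Fin n → α) : ℝ :=
  ∑ p ∈ univ.filter (fun p : Fin m × Fin m => p.1 < p.2),
    f a p.1 p.2 * socialCost y p.1 p.2 x

/-- Strategy-proofness of a randomized two-winner mechanism: voting for a
nearest candidate always minimizes a voter's expected cost, whatever the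
other voters do. -/
def RandSP {α : Type*} [PseudoMetricSpace α] {m n : ℕ}
    (y : Fin m → α) (f : (Fin n → Fin m) → Fin m → Fin m → ℝ) : Prop :=
  ∀ (i : Fin n) (xi : α) (a : Fin n → Fin m) (astar ai' : Fin m),
    (∀ k, dist xi (y astar) ≤ dist xi (y k)) →
    expCost y f (Function.update a i astar) xi ≤
      expCost y f (Function.update a i ai') xi

lemma sum_pairs_four (g : Fin 4 × Fin 4 → ℝ) :
    ∑ p ∈ univ.filter (fun p : Fin 4 × Fin 4 => p.1 < p.2), g p =
      g (0,1) + g (0,2) + g (0,3) + g (1,2) + g (1,3) + g (2,3) := by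
  have : univ.filter (fun p : Fin 4 × Fin 4 => p.1 < p.2) =
      {(0,1), (0,2), (0,3), (1,2), (1,3), (2,3)} := by decide
  rw [this]
  simp
  ring

/-- One voter for `v`, then `k` voters for candidate 2, the rest for candidate 3. -/
def prof (n k : ℕ) (v : Fin 4) (i : Fin n) : Fin 4 :=
  if i.val = 0 then v else if i.val ≤ k then 2 else 3

lemma pairCost_nonneg' (y : Fin 4 → ℝ) (k l : Fin 4) (z : ℝ) : 0 ≤ pairCost y k l z :=
  le_min dist_nonneg dist_nonneg

lemma sc_lower {n : ℕ} (y : Fin 4 → ℝ) (a : Fin n → Fin 4) (j k l : Fin 4) (c : ℝ) (hc : 0 ≤ c)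
    (h1 : c ≤ dist (y j) (y k)) (h2 : c ≤ dist (y j) (y l)) (t : ℕ)
    (ht : t ≤ (univ.filter (fun i => a i = j)).card) :
    (t : ℝ) * c ≤ socialCost y k l (fun i => y (a i)) := by
  unfold socialCost
  calc (t : ℝ) * c ≤ ((univ.filter (fun i => a i = j)).card : ℝ) * c := by gcongr
    _ = ∑ i ∈ univ.filter (fun i => a i = j), c := by simp
    _ ≤ ∑ i ∈ univ.filter (fun i => a i = j), pairCost y k l (y (a i)) := by
        apply Finset.sum_le_sum
        intro i hi
        rw [(Finset.mem_filter.mp hi).2]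
        exact le_min h1 h2
    _ ≤ _ := Finset.sum_le_sum_of_subset_of_nonneg (Finset.filter_subset _ _)
        (fun i _ _ => pairCost_nonneg' _ _ _ _)

lemma opt_le {n : ℕ} (y : Fin 4 → ℝ) (x : Fin n → ℝ) (k l : Fin 4) (h : k ≠ l) :
    OPT y x ≤ socialCost y k l x := by
  apply csInf_le
  · refine ⟨0, ?_⟩
    rintro c ⟨k, l, _, rfl⟩
    exact Finset.sum_nonneg (fun i _ => pairCost_nonneg' _ _ _ _)
  · exact ⟨k, l, h, rfl⟩

lemma card_v (n k : ℕ) (hn : 3 ≤ n) (v : Fin 4) :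
    1 ≤ (univ.filter (fun i => prof n k v i = v)).card :=
  Finset.card_pos.mpr ⟨⟨0, by omega⟩, by simp [prof]⟩

lemma card_2 (n k : ℕ) (hk : 2 * k + 1 ≤ n) (v : Fin 4) :
    k ≤ (univ.filter (fun i => prof n k v i = 2)).card := by
  have := Finset.card_le_card_of_injOn (s := (univ : Finset (Fin k)))
    (t := univ.filter (fun i => prof n k v i = 2))
    (fun i => ⟨i.val + 1, by omega⟩) (by
      intro i _
      have := i.2
      rw [Finset.mem_coe, Finset.mem_filter]
      refine ⟨Finset.mem_univ _, ?_⟩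
      simp [prof]) (by
      intro i _ j _ h
      simp at h
      exact Fin.ext h)
  simpa using this

lemma card_3 (n k : ℕ) (hk : 2 * k + 1 ≤ n) (v : Fin 4) :
    k ≤ (univ.filter (fun i => prof n k v i = 3)).card := by
  have := Finset.card_le_card_of_injOn (s := (univ : Finset (Fin k)))
    (t := univ.filter (fun i => prof n k v i = 3))
    (fun i => ⟨i.val + 1 + k, by omega⟩) (by
      intro i _
      have := i.2
      rw [Finset.mem_coe, Finset.mem_filter]
      refine ⟨Finset.mem_univ _, ?_⟩
      simp [prof]) (by
      intro i _ j _ h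
      simp at h
      exact Fin.ext h)
  simpa using this

lemma card_2_le (n k : ℕ) (v : Fin 4) (hv : v ≠ 2) :
    (univ.filter (fun i => prof n k v i = 2)).card ≤ k := by
  have := Finset.card_le_card_of_injOn (s := univ.filter (fun i => prof n k v i = 2))
    (t := Finset.Icc 1 k) (fun i => i.val) (by
      intro i hi
      replace hi := (Finset.mem_filter.mp (Finset.mem_coe.mp hi)).2
      unfold prof at hi
      simp only [coe_Icc, Set.mem_Icc]
      split_ifs at hi with h1 h2
      · exact absurd hi hv
      · omega
      · simp at hi) (by
      intro i _ j _ h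
      exact Fin.ext h)
  simpa using this

lemma card_v_le (n k : ℕ) (hn : 3 ≤ n) (v : Fin 4) (hv : v ≠ 2) (hv3 : v ≠ 3) :
    (univ.filter (fun i => prof n k v i = v)).card ≤ 1 := by
  rw [Finset.card_le_one]
  intro i hi j hj
  replace hi := (Finset.mem_filter.mp hi).2
  replace hj := (Finset.mem_filter.mp hj).2
  unfold prof at hi hj
  apply Fin.ext
  split_ifs at hi hj <;> first | omega | exact absurd hi.symm hv | exact absurd hi.symm hv3 | exact absurd hj.symm hv | exact absurd hj.symm hv3

/-- If the pair covers all but the voters of candidate `j`, at distance `≤ 1`. -/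
lemma sc_upper {n : ℕ} (y : Fin 4 → ℝ) (a : Fin n → Fin 4) (j k l : Fin 4)
    (h1 : dist (y j) (y k) ≤ 1) (t : ℕ)
    (ht : (univ.filter (fun i => a i = j)).card ≤ t) (ha : ∀ i, a i = j ∨ a i = k ∨ a i = l) :
    socialCost y k l (fun i => y (a i)) ≤ t := by
  unfold socialCost
  calc _ ≤ ∑ i, if a i = j then (1 : ℝ) else 0 := by
        apply Finset.sum_le_sum
        intro i _
        beta_reduce
        split_ifs with h
        · rw [h]; exact (min_le_left _ _).trans h1
        · rcases ha i with h' | h' | h'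
          · exact absurd h' h
          · rw [h']; exact (min_le_left _ _).trans (by simp)
          · rw [h']; exact (min_le_right _ _).trans (by simp)
    _ = ((univ.filter (fun i => a i = j)).card : ℝ) := by simp
    _ ≤ t := by exact_mod_cast ht

theorem stmt0 (σ : ℝ) (hσ : 3 ≤ σ) (n : ℕ) (hn : 3 ≤ n)
    (y : Fin 4 → ℝ) (hy : y = ![-σ + 2, 0, 1, 2])
    (f : (Fin n → Fin 4) → Fin 4 → Fin 4 → ℝ)
    (hmech : IsRandMech f) (hsp : RandSP y f) :
    ∃ (a : Fin n → Fin 4) (x : Fin n → ℝ), Consistent y a x ∧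
      (1 / 12) * min (n : ℝ) (Real.sqrt σ) ≤ expSC y f a x / OPT y x := by
  have y0 : y 0 = -σ + 2 := by simp [hy]
  have y1 : y 1 = 0 := by simp [hy]
  have y2 : y 2 = 1 := by simp [hy]
  have y3 : y 3 = 2 := by simp [hy]
  by_contra hcon
  push Not at hcon
  set M := min (n : ℝ) (Real.sqrt σ) with hM
  have hMn : M ≤ n := min_le_left _ _
  have hMs : M ≤ Real.sqrt σ := min_le_right _ _
  have hM1 : 8 / 7 ≤ M := by
    apply le_min
    · have : (3 : ℝ) ≤ n := by exact_mod_cast hn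
      linarith
    · apply Real.le_sqrt_of_sq_le; norm_num; linarith
  have hM2 : M * M ≤ σ := by
    have := Real.mul_self_sqrt (show 0 ≤ σ by linarith)
    nlinarith
  obtain ⟨k, hk1, hkM, hk8⟩ : ∃ k : ℕ, 1 ≤ k ∧ M / 8 ≤ k ∧ (k : ℝ) < M / 8 + 1 :=
    ⟨⌈M / 8⌉₊, Nat.one_le_ceil_iff.mpr (by linarith), Nat.le_ceil _,
      Nat.ceil_lt_add_one (by linarith)⟩
  have hkn : 2 * k + 1 ≤ n := by
    have : (8 * k : ℝ) < n + 8 := by linarith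
    have : 8 * k < n + 8 := by exact_mod_cast this
    omega
  have hkM' : (k : ℝ) ≤ M := by linarith
  have hk1' : (1 : ℝ) ≤ k := by exact_mod_cast hk1
  have hd : ∀ j l : Fin 4, j ≠ l → 1 ≤ dist (y j) (y l) := by
    intro j l hjl
    rw [Real.dist_eq]
    fin_cases j <;> fin_cases l <;> simp [y0, y1, y2, y3] at hjl ⊢ <;>
      first
      | (rw [le_abs]; left; linarith)
      | (rw [le_abs]; right; linarith)
      | norm_num
  have key : ∀ v : Fin 4, v ≠ 2 → v ≠ 3 → 1 ≤ OPT y (fun i => y (prof n k v i)) ∧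
      expSC y f (prof n k v) (fun i => y (prof n k v i)) <
        1 / 12 * M * OPT y (fun i => y (prof n k v i)) := by
    intro v hv2 hv3
    have h1 : 1 ≤ OPT y (fun i => y (prof n k v i)) := by
      apply le_csInf
      · exact ⟨_, 0, 1, by decide, rfl⟩
      · rintro c ⟨p, q, hpq, rfl⟩
        have low : ∀ j : Fin 4, j ≠ p → j ≠ q →
            1 ≤ (univ.filter (fun i => prof n k v i = j)).card →
            1 ≤ socialCost y p q (fun i => y (prof n k v i)) := by
          intro j hp hq hc
          simpa using sc_lower y (prof n k v) j p q 1 zero_le_one (hd _ _ hp) (hd _ _ hq) 1 hc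
        have : (v ≠ p ∧ v ≠ q) ∨ ((2 : Fin 4) ≠ p ∧ 2 ≠ q) ∨ ((3 : Fin 4) ≠ p ∧ 3 ≠ q) := by
          clear low
          revert v p q; decide
        rcases this with h | h | h
        · exact low _ h.1 h.2 (card_v n k hn v)
        · exact low _ h.1 h.2 (hk1.trans (card_2 n k hkn v))
        · exact low _ h.1 h.2 (hk1.trans (card_3 n k hkn v))
    refine ⟨h1, ?_⟩
    have := hcon (prof n k v) (fun i => y (prof n k v i)) (by
      intro i k; simp)
    rwa [div_lt_iff₀ (by linarith)] at this
  have hprof : ∀ v i, prof n k v i = v ∨ prof n k v i = 2 ∨ prof n k v i = 3 := by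
    intro v i
    unfold prof
    split_ifs <;> simp
  obtain ⟨-, kA⟩ := key 0 (by decide) (by decide)
  obtain ⟨-, kB⟩ := key 1 (by decide) (by decide)
  have oA : OPT y (fun i => y (prof n k 0 i)) ≤ k :=
    (opt_le y _ 3 0 (by decide)).trans
      (sc_upper y (prof n k 0) 2 3 0 (by rw [y2, y3, Real.dist_eq]; norm_num) k
        (card_2_le n k 0 (by decide)) (by intro i; have := hprof 0 i; tauto))
  have oB : OPT y (fun i => y (prof n k 1 i)) ≤ 1 := by
    have := (opt_le y _ 2 3 (by decide)).trans
      (sc_upper y (prof n k 1) 1 2 3 (by rw [y1, y2, Real.dist_eq]; norm_num) 1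
        (card_v_le n k hn 1 (by decide) (by decide)) (hprof 1))
    simpa using this
  obtain ⟨nA, -, -, sA⟩ := hmech (prof n k 0)
  obtain ⟨nB, -, -, sB⟩ := hmech (prof n k 1)
  rw [sum_pairs_four] at sA sB
  simp only at sA sB
  have scnn : ∀ p q (x : Fin n → ℝ), 0 ≤ socialCost y p q x := fun p q x =>
    Finset.sum_nonneg (fun i _ => pairCost_nonneg' _ _ _ _)
  -- A-profile
  have eA : f (prof n k 0) 2 3 * (σ - 1) ≤ 1 / 12 * M * k := by
    have h23 : σ - 1 ≤ socialCost y 2 3 (fun i => y (prof n k 0 i)) := by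
      simpa using sc_lower y (prof n k 0) 0 2 3 (σ - 1) (by linarith)
        (by rw [y0, y2, Real.dist_eq, le_abs]; right; linarith)
        (by rw [y0, y3, Real.dist_eq, le_abs]; right; linarith) 1 (card_v n k hn 0)
    have h1 : f (prof n k 0) 2 3 * (σ - 1) ≤
        expSC y f (prof n k 0) (fun i => y (prof n k 0 i)) := by
      unfold expSC
      rw [sum_pairs_four]
      simp only
      have g := fun p q => mul_nonneg (nA p q) (scnn p q (fun i => y (prof n k 0 i)))
      have := mul_le_mul_of_nonneg_left h23 (nA 2 3)
      linarith [g 0 1, g 0 2, g 0 3, g 1 2, g 1 3]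
    have : 1 / 12 * M * OPT y (fun i => y (prof n k 0 i)) ≤ 1 / 12 * M * k := by
      gcongr
    linarith
  have eB : (1 - f (prof n k 1) 2 3) * k ≤ 1 / 12 * M := by
    have l2 : ∀ p q : Fin 4, 2 ≠ p → 2 ≠ q →
        (k : ℝ) ≤ socialCost y p q (fun i => y (prof n k 1 i)) := by
      intro p q hp hq
      simpa using sc_lower y (prof n k 1) 2 p q 1 zero_le_one (hd _ _ hp) (hd _ _ hq) k
        (card_2 n k hkn 1)
    have l3 : ∀ p q : Fin 4, 3 ≠ p → 3 ≠ q →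
        (k : ℝ) ≤ socialCost y p q (fun i => y (prof n k 1 i)) := by
      intro p q hp hq
      simpa using sc_lower y (prof n k 1) 3 p q 1 zero_le_one (hd _ _ hp) (hd _ _ hq) k
        (card_3 n k hkn 1)
    have h1 : (1 - f (prof n k 1) 2 3) * k ≤
        expSC y f (prof n k 1) (fun i => y (prof n k 1 i)) := by
      unfold expSC
      rw [sum_pairs_four]
      simp only
      have g01 := mul_le_mul_of_nonneg_left (l2 0 1 (by decide) (by decide)) (nB 0 1)
      have g03 := mul_le_mul_of_nonneg_left (l2 0 3 (by decide) (by decide)) (nB 0 3)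
      have g13 := mul_le_mul_of_nonneg_left (l2 1 3 (by decide) (by decide)) (nB 1 3)
      have g02 := mul_le_mul_of_nonneg_left (l3 0 2 (by decide) (by decide)) (nB 0 2)
      have g12 := mul_le_mul_of_nonneg_left (l3 1 2 (by decide) (by decide)) (nB 1 2)
      have g23 := mul_nonneg (nB 2 3) (scnn 2 3 (fun i => y (prof n k 1 i)))
      have e : 1 - f (prof n k 1) 2 3 = f (prof n k 1) 0 1 + f (prof n k 1) 0 2
        + f (prof n k 1) 0 3 + f (prof n k 1) 1 2 + f (prof n k 1) 1 3 := by linarith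
      rw [e]
      linarith
    have : 1 / 12 * M * OPT y (fun i => y (prof n k 1 i)) ≤ 1 / 12 * M * 1 := by
      gcongr
    linarith
  -- strategy-proofness at the midpoint of candidates 0 and 1
  have hle : f (prof n k 1) 2 3 ≤ f (prof n k 0) 2 3 := by
    set z : ℝ := -(σ - 2) / 2 with hz
    have d0 : dist z (y 0) = (σ - 2) / 2 := by
      rw [y0, Real.dist_eq, abs_of_nonneg] <;> rw [hz] <;> linarith
    have d1 : dist z (y 1) = (σ - 2) / 2 := by
      rw [y1, Real.dist_eq, abs_of_nonpos] <;> rw [hz] <;> linarith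
    have d2 : dist z (y 2) = (σ - 2) / 2 + 1 := by
      rw [y2, Real.dist_eq, abs_of_nonpos] <;> rw [hz] <;> linarith
    have d3 : dist z (y 3) = (σ - 2) / 2 + 2 := by
      rw [y3, Real.dist_eq, abs_of_nonpos] <;> rw [hz] <;> linarith
    have hup : ∀ v, Function.update (prof n k 0) ⟨0, by omega⟩ v = prof n k v := by
      intro v
      funext i
      by_cases hi : i = ⟨0, by omega⟩
      · subst hi; simp [prof]
      · have : i.val ≠ 0 := fun h => hi (Fin.ext h)
        simp [hi, prof, this]
    have hs := hsp ⟨0, by omega⟩ z (prof n k 0) 1 0 (by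
      intro j
      fin_cases j <;> simp only [Fin.zero_eta, Fin.mk_one, Fin.reduceFinMk] <;>
        simp only [d0, d1, d2, d3] <;> linarith)
    rw [hup, hup] at hs
    have hc : ∀ v, expCost y f (prof n k v) z = (f (prof n k v) 0 1 + f (prof n k v) 0 2
        + f (prof n k v) 0 3 + f (prof n k v) 1 2 + f (prof n k v) 1 3 + f (prof n k v) 2 3)
          * ((σ - 2) / 2) + f (prof n k v) 2 3 := by
      intro v
      unfold expCost
      rw [sum_pairs_four]
      simp only [pairCost, d0, d1, d2, d3]
      rw [min_self, min_eq_left (by linarith : (σ - 2) / 2 ≤ (σ - 2) / 2 + 1),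
        min_eq_left (by linarith : (σ - 2) / 2 ≤ (σ - 2) / 2 + 2),
        min_eq_left (by linarith : (σ - 2) / 2 + 1 ≤ (σ - 2) / 2 + 2)]
      ring
    rw [hc, hc, sA, sB] at hs
    linarith
  have hp : f (prof n k 0) 2 3 ≤ 1 / 8 := by
    have : M * k ≤ M * M := by gcongr
    by_contra h
    push Not at h
    nlinarith
  have hp' : 7 / 8 ≤ 1 - f (prof n k 1) 2 3 := by linarith
  nlinarith
end

section
/- Let m > 3, let r > 2 be real, and place m candidates in ℝ^{m−1} by y_i = e_i for 1 ≤ i ≤ m−1 and y_m = (r, r, …, r); here d_min = √2, d_max = √((r−1)² + (m−2)r²), and σ = d_max/d_min. Then for n ≥ 3 voters, every strategy-proof randomized two-winner scv mechanism for these candidates has distortion at least σ/6 on this candidate configuration. -/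
open Finset

/-- The candidate configuration of Instance 3 of the paper: in `ℝ^(m-1)`,
candidate `i` (for `i < m - 1`) sits at the `i`-th standard basis vector, and the
last candidate sits at `(r, r, ..., r)`. -/
noncomputable def multiCand (m : ℕ) (r : ℝ) : Fin m → EuclideanSpace ℝ (Fin (m - 1)) :=
  fun k =>
    if h : (k : ℕ) < m - 1 then EuclideanSpace.single (⟨(k : ℕ), h⟩ : Fin (m - 1)) (1 : ℝ)
    else (WithLp.equiv 2 (Fin (m - 1) → ℝ)).symm (fun _ => r)

theorem three : ∀ i j k t : Fin 3, i ≠ j → i ≠ k → j ≠ k → ¬ t = i → t = j ∨ t = k := by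
  decide

/-- The index set of unordered pairs. -/
def prs (m : ℕ) : Finset (Fin m × Fin m) :=
  univ.filter (fun p : Fin m × Fin m => p.1 < p.2)

/-- `p` is the unordered pair `{a, b}`. -/
def isPr {m : ℕ} (p : Fin m × Fin m) (a b : Fin m) : Prop := p = (a, b) ∨ p = (b, a)

open Classical in
/-- Probability of electing `{a, b}` under `w`. -/
noncomputable def prQ {m : ℕ} (w : Fin m → Fin m → ℝ) (a b : Fin m) : ℝ :=
  ∑ p ∈ prs m, w p.1 p.2 * (if isPr p a b then 1 else 0)

theorem OPT_bdd {α : Type*} [PseudoMetricSpace α] {m n : ℕ}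
    (y : Fin m → α) (x : Fin n → α) :
    BddBelow {c : ℝ | ∃ k l : Fin m, k ≠ l ∧ c = socialCost y k l x} := by
  refine ⟨0, ?_⟩
  rintro c ⟨k, l, _, rfl⟩
  exact Finset.sum_nonneg fun i _ => le_min dist_nonneg dist_nonneg

theorem OPT_le {α : Type*} [PseudoMetricSpace α] {m n : ℕ}
    (y : Fin m → α) (x : Fin n → α) (k l : Fin m) (h : k ≠ l) :
    OPT y x ≤ socialCost y k l x :=
  csInf_le (OPT_bdd y x) ⟨k, l, h, rfl⟩

theorem le_OPT {α : Type*} [PseudoMetricSpace α] {m n : ℕ}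
    (y : Fin m → α) (x : Fin n → α) (c : ℝ) (a b : Fin m) (hab : a ≠ b)
    (h : ∀ k l, k ≠ l → c ≤ socialCost y k l x) : c ≤ OPT y x := by
  refine le_csInf ⟨_, a, b, hab, rfl⟩ ?_
  rintro _ ⟨k, l, hkl, rfl⟩
  exact h k l hkl

theorem pair_nonneg {α : Type*} [PseudoMetricSpace α] {m : ℕ}
    (y : Fin m → α) (k l : Fin m) (z : α) : 0 ≤ pairCost y k l z :=
  le_min dist_nonneg dist_nonneg

theorem pair_le_SC {α : Type*} [PseudoMetricSpace α] {m n : ℕ}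
    (y : Fin m → α) (k l : Fin m) (x : Fin n → α) (i : Fin n) :
    pairCost y k l (x i) ≤ socialCost y k l x :=
  Finset.single_le_sum (f := fun i => pairCost y k l (x i))
    (fun i _ => pair_nonneg y k l (x i)) (Finset.mem_univ i)

/-- On two-candidate profiles the mechanism elects these two. -/
theorem two_val {α : Type*} [PseudoMetricSpace α] {m n : ℕ}
    (y : Fin m → α) (hsep : ∀ a b, a ≠ b → 1 ≤ dist (y a) (y b))
    (hpt : ∀ (a : Fin m) (δ : ℝ), 0 < δ → ∃ z, dist z (y a) = δ)
    (f : (Fin n → Fin m) → Fin m → Fin m → ℝ) (hmech : IsRandMech f)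
    (S : ℝ) (hS : 0 < S)
    (H : ∀ a x, Consistent y a x → expSC y f a x / OPT y x < S)
    (A : Fin n → Fin m) (a b : Fin m) (hab : a ≠ b) (i0 j0 : Fin n) (hi : A i0 = a)
    (hj : A j0 = b) (hA : ∀ i, A i = a ∨ A i = b)
    (p : Fin m × Fin m) (hp : p ∈ prs m) (hw : f A p.1 p.2 ≠ 0) : isPr p a b := by
  by_contra hne
  obtain ⟨h0, -, -, -⟩ := hmech A
  have hε : 0 < f A p.1 p.2 := lt_of_le_of_ne (h0 _ _) (Ne.symm hw)
  set ε := f A p.1 p.2 with hεd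
  set δ := min (1/2) (ε / (2 * S)) with hδd
  have hδ : 0 < δ := lt_min (by norm_num) (by positivity)
  have hδ1 : δ ≤ 1/2 := min_le_left _ _
  have hδ2 : δ * (2 * S) ≤ ε := by
    have := min_le_right (1/2) (ε / (2 * S))
    rwa [← hδd, le_div_iff₀ (by positivity)] at this
  obtain ⟨z, hz⟩ := hpt a δ hδ
  have hzk : ∀ k, k ≠ a → 1/2 ≤ dist z (y k) := by
    intro k hk
    have h1 := hsep a k (Ne.symm hk)
    have h2 := dist_triangle (y a) z (y k)
    rw [dist_comm (y a) z] at h2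
    linarith
  have hij : j0 ≠ i0 := by rintro rfl; exact hab (hi.symm.trans hj)
  let x : Fin n → α := Function.update (fun i => y (A i)) i0 z
  have hxi : x i0 = z := by simp [x]
  have hxj : ∀ j, j ≠ i0 → x j = y (A j) := by intro j hj; simp [x, hj]
  have hcons : Consistent y A x := by
    intro i k
    by_cases h : i = i0
    · subst h
      rw [hxi, hi, hz]
      by_cases hk : k = a
      · rw [hk, hz]
      · exact hδ1.trans (hzk k hk)
    · rw [hxj i h, dist_self]; exact dist_nonneg
  have hO1 : OPT y x ≤ δ := by
    refine (OPT_le y x a b hab).trans ?_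
    unfold socialCost
    rw [Finset.sum_eq_single i0]
    · rw [hxi]; exact (min_le_left _ _).trans hz.le
    · intro j _ hj
      rw [hxj j hj]
      apply le_antisymm _ (pair_nonneg _ _ _ _)
      rcases hA j with h | h
      · rw [h]; exact (min_le_left _ _).trans (dist_self _).le
      · rw [h]; exact (min_le_right _ _).trans (dist_self _).le
    · simp
  have hO2 : δ ≤ OPT y x := by
    refine le_OPT y x δ a b hab fun k l _ => ?_
    refine le_trans ?_ (pair_le_SC y k l x i0)
    rw [hxi]
    have : ∀ k, δ ≤ dist z (y k) := by
      intro k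
      by_cases hk : k = a
      · rw [hk, hz]
      · exact hδ1.trans (hzk k hk)
    exact le_min (this k) (this l)
  have hp' : p.1 ≠ p.2 := by
    have : p.1 < p.2 := by simpa [prs] using hp
    exact this.ne
  have hSC : 1/2 ≤ socialCost y p.1 p.2 x := by
    by_cases h : p.1 ≠ a ∧ p.2 ≠ a
    · refine le_trans ?_ (pair_le_SC y _ _ x i0)
      rw [hxi]
      exact le_min (hzk _ h.1) (hzk _ h.2)
    · have h2 : p.1 ≠ b ∧ p.2 ≠ b := by
        by_contra h2
        apply hne
        unfold isPr
        simp only [Prod.ext_iff]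
        grind
      refine le_trans ?_ (pair_le_SC y _ _ x j0)
      rw [hxj j0 hij, hj]
      have := hsep b _ h2.1.symm
      have := hsep b _ h2.2.symm
      exact le_min (by linarith) (by linarith)
  have hE : ε * (1/2) ≤ expSC y f A x := by
    refine le_trans (mul_le_mul_of_nonneg_left hSC hε.le) ?_
    unfold expSC
    refine Finset.single_le_sum (f := fun p : Fin m × Fin m => f A p.1 p.2 * socialCost y p.1 p.2 x)
      (fun q _ => mul_nonneg (h0 _ _) (Finset.sum_nonneg fun i _ => pair_nonneg _ _ _ _)) hp
  have hlt := H A x hcons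
  rw [div_lt_iff₀ (by linarith)] at hlt
  nlinarith

/-- Coalitional version of strategy-proofness. -/
theorem group_sp {α : Type*} [PseudoMetricSpace α] {m n : ℕ}
    (y : Fin m → α) (f : (Fin n → Fin m) → Fin m → Fin m → ℝ) (hsp : RandSP y f)
    (z : α) (s t : Fin m) (hz : ∀ k, dist z (y s) ≤ dist z (y k)) (T : Finset (Fin n)) :
    ∀ A : Fin n → Fin m,
      expCost y f (fun i => if i ∈ T then s else A i) z ≤
      expCost y f (fun i => if i ∈ T then t else A i) z := by
  induction T using Finset.induction_on with
  | empty => intro A; simp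
  | insert j T hj ih =>
    intro A
    have e1 : (fun i => if i ∈ insert j T then s else A i) =
        fun i => if i ∈ T then s else Function.update A j s i := by
      funext i; by_cases h : i = j <;> simp [h, hj]
    have e2 : (fun i => if i ∈ T then t else Function.update A j s i) =
        Function.update (fun i => if i ∈ T then t else A i) j s := by
      funext i; by_cases h : i = j <;> simp [h, hj]
    have e3 : (fun i => if i ∈ insert j T then t else A i) =
        Function.update (fun i => if i ∈ T then t else A i) j t := by
      funext i; by_cases h : i = j <;> simp [h, hj]
    rw [e1, e3]
    refine (ih _).trans ?_
    rw [e2]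
    exact hsp j z _ s t hz

theorem reduce_sp {α : Type*} [PseudoMetricSpace α] {m n : ℕ}
    (y : Fin m → α) (f : (Fin n → Fin m) → Fin m → Fin m → ℝ) (hsp : RandSP y f)
    (g : Fin n → Fin 3) :
    RandSP y (fun v : Fin 3 → Fin m => f (fun i => v (g i))) := by
  intro i xi v s t hz
  have h := group_sp y f hsp xi s t hz (univ.filter (fun k => g k = i)) (fun k => v (g k))
  have e : ∀ s, (fun k => if k ∈ univ.filter (fun k => g k = i) then s else v (g k)) =
      fun k => Function.update v i s (g k) := by
    intro s; funext k; by_cases h : g k = i <;> simp [h]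
  rw [e, e] at h
  exact h

/-- A lottery whose expected cost is the minimum is supported on minimizers. -/
theorem supp_min {ι : Type*} (s : Finset ι) (w g : ι → ℝ) (ρ : ℝ) (hw : ∀ i ∈ s, 0 ≤ w i)
    (h1 : ∑ i ∈ s, w i = 1) (hg : ∀ i ∈ s, ρ ≤ g i) (hle : ∑ i ∈ s, w i * g i ≤ ρ)
    (i : ι) (hi : i ∈ s) (hne : w i ≠ 0) : g i = ρ := by
  have h2 : ∑ i ∈ s, w i * (g i - ρ) ≤ 0 := by
    simp only [mul_sub, Finset.sum_sub_distrib, ← Finset.sum_mul, h1]; linarith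
  have h3 : ∀ i ∈ s, 0 ≤ w i * (g i - ρ) := fun i hi =>
    mul_nonneg (hw i hi) (by linarith [hg i hi])
  have h4 := (Finset.sum_eq_zero_iff_of_nonneg h3).1 (le_antisymm h2 (Finset.sum_nonneg h3)) i hi
  rcases mul_eq_zero.1 h4 with h | h
  · exact absurd h hne
  · linarith

theorem expCost_of_min {α : Type*} [PseudoMetricSpace α] {m : ℕ}
    (y : Fin m → α) (h : (Fin 3 → Fin m) → Fin m → Fin m → ℝ) (hmech : IsRandMech h)
    (v : Fin 3 → Fin m) (z : α) (ρ : ℝ)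
    (hs : ∀ p ∈ prs m, h v p.1 p.2 ≠ 0 → pairCost y p.1 p.2 z = ρ) :
    expCost y h v z = ρ := by
  have e : expCost y h v z = ∑ p ∈ prs m, h v p.1 p.2 * ρ := by
    refine Finset.sum_congr rfl fun p hp => ?_
    by_cases h0 : h v p.1 p.2 = 0
    · simp [h0]
    · rw [hs p hp h0]
  rw [e, ← Finset.sum_mul]
  have : ∑ p ∈ prs m, h v p.1 p.2 = 1 := (hmech v).2.2.2
  rw [this, one_mul]

/-- In a profile with distinct votes, each pair of votes is hit by the elected pair. -/
theorem hit {α : Type*} [PseudoMetricSpace α] {m : ℕ}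
    (y : Fin m → α)
    (hmid : ∀ a b, a ≠ b → ∃ (z : α) (ρ : ℝ), dist z (y a) = ρ ∧ dist z (y b) = ρ ∧
      ∀ c, c ≠ a → c ≠ b → ρ < dist z (y c))
    (h : (Fin 3 → Fin m) → Fin m → Fin m → ℝ) (hmech : IsRandMech h) (hsp : RandSP y h)
    (htwo : ∀ v a b, a ≠ b → (∃ i, v i = a) → (∃ i, v i = b) → (∀ i, v i = a ∨ v i = b) →
      ∀ p ∈ prs m, h v p.1 p.2 ≠ 0 → isPr p a b)
    (v : Fin 3 → Fin m) (hv : Function.Injective v) (i j k : Fin 3) (hij : i ≠ j) (hik : i ≠ k)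
    (hjk : j ≠ k) (p : Fin m × Fin m) (hp : p ∈ prs m) (hne : h v p.1 p.2 ≠ 0) :
    (p.1 = v i ∨ p.1 = v j) ∨ (p.2 = v i ∨ p.2 = v j) := by
  obtain ⟨z, ρ, h1, h2, h3⟩ := hmid (v i) (v j) (hv.ne hij)
  have hall : ∀ c, ρ ≤ dist z (y c) := by
    intro c
    by_cases ha : c = v i
    · rw [ha, h1]
    by_cases hb : c = v j
    · rw [hb, h2]
    exact (h3 c ha hb).le
  have hs := hsp i z v (v i) (v j) (by intro c; rw [h1]; exact hall c)
  rw [Function.update_eq_self] at hs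
  have e : expCost y h (Function.update v i (v j)) z = ρ := by
    apply expCost_of_min y h hmech
    intro q hq hqne
    have := htwo _ (v j) (v k) (hv.ne hjk) ⟨i, by simp⟩
      ⟨k, by simp [Function.update_of_ne hik.symm]⟩
      (by
        intro t
        by_cases ht : t = i
        · left; simp [ht]
        · rw [Function.update_of_ne ht]
          have : t = j ∨ t = k := three i j k t hij hik hjk ht
          rcases this with rfl | rfl <;> simp) q hq hqne
    unfold pairCost
    rcases this with rfl | rfl
    · rw [h2]; exact min_eq_left (hall _)
    · rw [h2]; exact min_eq_right (hall _)
  rw [e] at hs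
  have hm := supp_min (prs m) (fun p => h v p.1 p.2) (fun p => pairCost y p.1 p.2 z) ρ
    (fun p _ => (hmech v).1 _ _) (hmech v).2.2.2 (fun p _ => le_min (hall _) (hall _)) hs p hp hne
  by_contra hcon
  push Not at hcon
  have := lt_min (h3 _ hcon.1.1 hcon.1.2) (h3 _ hcon.2.1 hcon.2.2)
  unfold pairCost at hm
  linarith

theorem supp3 {α : Type*} [PseudoMetricSpace α] {m : ℕ}
    (y : Fin m → α)
    (hmid : ∀ a b, a ≠ b → ∃ (z : α) (ρ : ℝ), dist z (y a) = ρ ∧ dist z (y b) = ρ ∧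
      ∀ c, c ≠ a → c ≠ b → ρ < dist z (y c))
    (h : (Fin 3 → Fin m) → Fin m → Fin m → ℝ) (hmech : IsRandMech h) (hsp : RandSP y h)
    (htwo : ∀ v a b, a ≠ b → (∃ i, v i = a) → (∃ i, v i = b) → (∀ i, v i = a ∨ v i = b) →
      ∀ p ∈ prs m, h v p.1 p.2 ≠ 0 → isPr p a b)
    (v : Fin 3 → Fin m) (hv : Function.Injective v) (i j k : Fin 3) (hij : i ≠ j) (hik : i ≠ k)
    (hjk : j ≠ k) (p : Fin m × Fin m) (hp : p ∈ prs m) (hne : h v p.1 p.2 ≠ 0) :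
    isPr p (v i) (v j) ∨ isPr p (v i) (v k) ∨ isPr p (v j) (v k) := by
  have a1 := hit y hmid h hmech hsp htwo v hv i j k hij hik hjk p hp hne
  have a2 := hit y hmid h hmech hsp htwo v hv i k j hik hij hjk.symm p hp hne
  have a3 := hit y hmid h hmech hsp htwo v hv j k i hjk hij.symm hik.symm p hp hne
  have b1 := hv.ne hij
  have b2 := hv.ne hik
  have b3 := hv.ne hjk
  have hlt : p.1 < p.2 := by simpa [prs] using hp
  have := hlt.ne
  simp only [isPr, Prod.ext_iff]
  grind

theorem cost3 {α : Type*} [PseudoMetricSpace α] {m : ℕ}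
    (y : Fin m → α) (h : (Fin 3 → Fin m) → Fin m → Fin m → ℝ) (hmech : IsRandMech h)
    (v : Fin 3 → Fin m) (a b c : Fin m) (hca : c ≠ a) (hcb : c ≠ b)
    (hs : ∀ p ∈ prs m, h v p.1 p.2 ≠ 0 → isPr p a b ∨ isPr p c a ∨ isPr p c b)
    (z : α) (ρ : ℝ) (hc : dist z (y c) = ρ) (ha : ρ ≤ dist z (y a)) (hb : ρ ≤ dist z (y b)) :
    expCost y h v z = ρ + prQ (h v) a b * (min (dist z (y a)) (dist z (y b)) - ρ) := by
  have e : expCost y h v z = ∑ p ∈ prs m, (h v p.1 p.2 * ρ +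
      h v p.1 p.2 * (open Classical in if isPr p a b then 1 else 0) *
        (min (dist z (y a)) (dist z (y b)) - ρ)) := by
    refine Finset.sum_congr rfl fun p hp => ?_
    by_cases h0 : h v p.1 p.2 = 0
    · simp [h0]
    · by_cases hab : isPr p a b
      · rw [if_pos hab]
        rcases hab with rfl | rfl
        · unfold pairCost; ring
        · unfold pairCost; rw [min_comm]; ring
      · rw [if_neg hab]
        have : pairCost y p.1 p.2 z = ρ := by
          unfold pairCost
          rcases hs p hp h0 with h | (rfl | rfl) | (rfl | rfl)
          · exact absurd h hab
          · rw [hc]; exact min_eq_left ha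
          · rw [hc]; exact min_eq_right ha
          · rw [hc]; exact min_eq_left hb
          · rw [hc]; exact min_eq_right hb
        rw [this]; ring
  rw [e, Finset.sum_add_distrib, ← Finset.sum_mul, ← Finset.sum_mul]
  have : ∑ p ∈ prs m, h v p.1 p.2 = 1 := (hmech v).2.2.2
  rw [this, one_mul]
  rfl

theorem isPr_symm {m : ℕ} (p : Fin m × Fin m) (a b : Fin m) : isPr p a b ↔ isPr p b a := by
  unfold isPr; tauto

theorem Q_eq {α : Type*} [PseudoMetricSpace α] {m : ℕ}
    (y : Fin m → α)
    (hmid : ∀ a b, a ≠ b → ∃ (z : α) (ρ : ℝ), dist z (y a) = ρ ∧ dist z (y b) = ρ ∧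
      ∀ c, c ≠ a → c ≠ b → ρ < dist z (y c))
    (h : (Fin 3 → Fin m) → Fin m → Fin m → ℝ) (hmech : IsRandMech h) (hsp : RandSP y h)
    (htwo : ∀ v a b, a ≠ b → (∃ i, v i = a) → (∃ i, v i = b) → (∀ i, v i = a ∨ v i = b) →
      ∀ p ∈ prs m, h v p.1 p.2 ≠ 0 → isPr p a b)
    (v : Fin 3 → Fin m) (hv : Function.Injective v) (i j k : Fin 3) (hij : i ≠ j) (hik : i ≠ k)
    (hjk : j ≠ k) (d : Fin m) (hd : ∀ t, v t ≠ d) :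
    prQ (h (Function.update v i d)) (v j) (v k) = prQ (h v) (v j) (v k) := by
  obtain ⟨z, ρ, h1, h2, h3⟩ := hmid (v i) d (hd i)
  have hall : ∀ c, ρ ≤ dist z (y c) := by
    intro c
    by_cases ha : c = v i
    · rw [ha, h1]
    by_cases hb : c = d
    · rw [hb, h2]
    exact (h3 c ha hb).le
  have s1 := hsp i z v (v i) d (by intro c; rw [h1]; exact hall c)
  have s2 := hsp i z v d (v i) (by intro c; rw [h2]; exact hall c)
  rw [Function.update_eq_self] at s1 s2
  have s := le_antisymm s1 s2
  have hv' : Function.Injective (Function.update v i d) := by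
    intro a b hab
    by_cases ha : a = i <;> by_cases hb : b = i
    · rw [ha, hb]
    · subst ha; simp [Function.update_of_ne hb] at hab; exact absurd hab.symm (hd b)
    · subst hb; simp [Function.update_of_ne ha] at hab; exact absurd hab (hd a)
    · rw [Function.update_of_ne ha, Function.update_of_ne hb] at hab; exact hv hab
  have uj : Function.update v i d j = v j := Function.update_of_ne hij.symm _ _
  have uk : Function.update v i d k = v k := Function.update_of_ne hik.symm _ _
  have ui : Function.update v i d i = d := by simp
  rw [cost3 y h hmech v (v j) (v k) (v i) (hv.ne hij) (hv.ne hik) (by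
      intro p hp hne
      have := supp3 y hmid h hmech hsp htwo v hv i j k hij hik hjk p hp hne
      tauto) z ρ h1 (hall _) (hall _),
    cost3 y h hmech (Function.update v i d) (v j) (v k) d (hd j).symm (hd k).symm (by
      intro p hp hne
      have := supp3 y hmid h hmech hsp htwo _ hv' i j k hij hik hjk p hp hne
      rw [ui, uj, uk] at this
      tauto) z ρ h2 (hall _) (hall _)] at s
  have hpos : 0 < min (dist z (y (v j))) (dist z (y (v k))) - ρ := by
    have := lt_min (h3 (v j) (hv.ne hij.symm) (hd j)) (h3 (v k) (hv.ne hik.symm) (hd k))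
    linarith
  have := mul_right_cancel₀ hpos.ne' (add_left_cancel s)
  exact this.symm

theorem Q_sum {m : ℕ} (w : Fin m → Fin m → ℝ) (hw : ∀ k l, 0 ≤ w k l)
    (h1 : ∑ p ∈ prs m, w p.1 p.2 = 1) (a b c : Fin m)
    (hs : ∀ p ∈ prs m, w p.1 p.2 ≠ 0 → isPr p a b ∨ isPr p a c ∨ isPr p b c) :
    1 ≤ prQ w a b + prQ w a c + prQ w b c := by
  classical
  unfold prQ
  rw [← Finset.sum_add_distrib, ← Finset.sum_add_distrib]
  refine h1.symm.le.trans ?_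
  refine Finset.sum_le_sum fun p hp => ?_
  by_cases h0 : w p.1 p.2 = 0
  · simp [h0]
  · have := hw p.1 p.2
    rcases hs p hp h0 with h | h | h <;> simp only [h, if_true] <;> split_ifs <;> linarith

theorem Q_nonneg {m : ℕ} (w : Fin m → Fin m → ℝ) (hw : ∀ k l, 0 ≤ w k l) (a b : Fin m) :
    0 ≤ prQ w a b := by
  classical
  unfold prQ
  refine Finset.sum_nonneg fun p _ => mul_nonneg (hw _ _) ?_
  split_ifs <;> norm_num

/-- Final estimate: a profile where the far candidate is missed with probability `1/3`. -/
theorem final_bound {α : Type*} [PseudoMetricSpace α] {m n : ℕ}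
    (y : Fin m → α) (f : (Fin n → Fin m) → Fin m → Fin m → ℝ) (hmech : IsRandMech f)
    (D s : ℝ) (hs : 0 < s) (hD : 0 < D) (hsep : ∀ a b, a ≠ b → s ≤ dist (y a) (y b))
    (g : Fin n → Fin 3) (hg : Function.Surjective g) (v : Fin 3 → Fin m)
    (hv : Function.Injective v) (i j k : Fin 3) (hij : i ≠ j) (hik : i ≠ k) (hjk : j ≠ k)
    (hone : ∃ t0, ∀ t, g t = k → t = t0)
    (hdj : dist (y (v i)) (y (v j)) = D) (hdk : dist (y (v i)) (y (v k)) = D)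
    (hdjk : dist (y (v k)) (y (v j)) = s)
    (hQ : 1/3 ≤ prQ (f (fun t => v (g t))) (v j) (v k)) :
    Consistent y (fun t => v (g t)) (fun t => y (v (g t))) ∧
      D / s / 6 ≤ expSC y f (fun t => v (g t)) (fun t => y (v (g t))) /
        OPT y (fun t => y (v (g t))) := by
  classical
  refine ⟨fun t c => by simp, ?_⟩
  set A : Fin n → Fin m := fun t => v (g t) with hAd
  set x : Fin n → α := fun t => y (v (g t)) with hxd
  obtain ⟨h0, -, -, -⟩ := hmech A
  have hnn : ∀ a b, 0 ≤ socialCost y a b x := fun a b =>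
    Finset.sum_nonneg fun i _ => pair_nonneg _ _ _ _
  obtain ⟨t0, ht0⟩ := hone
  have hO1 : OPT y x ≤ s := by
    refine (OPT_le y x (v i) (v j) (hv.ne hij)).trans ?_
    have hz : ∀ t, t ≠ t0 → pairCost y (v i) (v j) (x t) = 0 := by
      intro t ht
      apply le_antisymm _ (pair_nonneg _ _ _ _)
      have : g t ≠ k := fun h => ht (ht0 t h)
      have : g t = i ∨ g t = j := by
        have h3 := three k i j (g t) hik.symm hjk.symm hij this
        exact h3
      rcases this with h | h
      · simp only [hxd, h]; exact (min_le_left _ _).trans (dist_self _).le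
      · simp only [hxd, h]; exact (min_le_right _ _).trans (dist_self _).le
    unfold socialCost
    rw [Finset.sum_eq_single t0 (fun t _ h => hz t h) (by simp)]
    obtain ⟨t1, ht1⟩ := hg k
    have : t1 = t0 := ht0 t1 ht1
    subst this
    simp only [hxd, ht1]
    exact (min_le_right _ _).trans hdjk.le
  have hO2 : s ≤ OPT y x := by
    refine le_OPT y x s (v i) (v j) (hv.ne hij) fun a b _ => ?_
    have : ∃ q, v q ≠ a ∧ v q ≠ b := by
      by_contra hcon
      push Not at hcon
      have b1 := hv.ne hij
      have b2 := hv.ne hik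
      have b3 := hv.ne hjk
      have c1 := hcon i
      have c2 := hcon j
      have c3 := hcon k
      grind
    obtain ⟨q, hqa, hqb⟩ := this
    obtain ⟨t, ht⟩ := hg q
    refine le_trans ?_ (pair_le_SC y a b x t)
    simp only [hxd, ht]
    exact le_min (hsep _ _ hqa) (hsep _ _ hqb)
  have hE : 1/3 * D ≤ expSC y f A x := by
    refine (mul_le_mul_of_nonneg_right hQ hD.le).trans ?_
    unfold prQ expSC
    rw [Finset.sum_mul]
    refine Finset.sum_le_sum fun p hp => ?_
    rw [mul_assoc]
    refine mul_le_mul_of_nonneg_left ?_ (h0 _ _)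
    obtain ⟨t, ht⟩ := hg i
    split_ifs with h
    · rw [one_mul]
      refine le_trans ?_ (pair_le_SC y _ _ x t)
      simp only [hxd, ht]
      rcases h with rfl | rfl
      · exact le_min hdj.ge hdk.ge
      · exact le_min hdk.ge hdj.ge
    · simpa using hnn _ _
  have hO : OPT y x = s := le_antisymm hO1 hO2
  rw [hO, div_div, div_le_div_iff₀ (by positivity) hs]
  nlinarith [mul_pos hD hs]

theorem abstract_main {α : Type*} [PseudoMetricSpace α] {m n : ℕ}
    (y : Fin m → α) (f : (Fin n → Fin m) → Fin m → Fin m → ℝ) (hmech : IsRandMech f)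
    (hsp : RandSP y f) (hn : 3 ≤ n)
    (D s : ℝ) (hs : 1 ≤ s) (hD : 0 < D) (hsep : ∀ a b, a ≠ b → s ≤ dist (y a) (y b))
    (hpt : ∀ (a : Fin m) (δ : ℝ), 0 < δ → ∃ z, dist z (y a) = δ)
    (hmid : ∀ a b, a ≠ b → ∃ (z : α) (ρ : ℝ), dist z (y a) = ρ ∧ dist z (y b) = ρ ∧
      ∀ c, c ≠ a → c ≠ b → ρ < dist z (y c))
    (v : Fin 3 → Fin m) (hv : Function.Injective v) (d : Fin m) (hd : ∀ t, v t ≠ d)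
    (hvd : ∀ t, dist (y d) (y (v t)) = D)
    (hvv : ∀ i j, i ≠ j → dist (y (v i)) (y (v j)) = s) :
    ∃ (a : Fin n → Fin m) (x : Fin n → α),
      Consistent y a x ∧ D / s / 6 ≤ expSC y f a x / OPT y x := by
  by_contra hcon
  push Not at hcon
  have hs0 : 0 < s := by linarith
  let g : Fin n → Fin 3 := fun t => if t.val = 0 then 0 else if t.val = 1 then 1 else 2
  have hg : Function.Surjective g := by
    intro q
    fin_cases q
    · exact ⟨⟨0, by omega⟩, by simp [g]⟩
    · exact ⟨⟨1, by omega⟩, by simp [g]⟩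
    · exact ⟨⟨2, by omega⟩, by simp [g]⟩
  have hone0 : ∃ t0, ∀ t, g t = 0 → t = t0 := by
    refine ⟨⟨0, by omega⟩, fun t ht => ?_⟩
    simp only [g] at ht
    split_ifs at ht with h1 h2
    · exact Fin.ext h1
    · exact absurd ht (by decide)
    · exact absurd ht (by decide)
  have hone1 : ∃ t0, ∀ t, g t = 1 → t = t0 := by
    refine ⟨⟨1, by omega⟩, fun t ht => ?_⟩
    simp only [g] at ht
    split_ifs at ht with h1 h2
    · exact absurd ht (by decide)
    · exact Fin.ext h2
    · exact absurd ht (by decide)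
  let h : (Fin 3 → Fin m) → Fin m → Fin m → ℝ := fun v => f (fun i => v (g i))
  have hhm : IsRandMech h := fun v => hmech _
  have hhs : RandSP y h := reduce_sp y f hsp g
  have htwo : ∀ v a b, a ≠ b → (∃ i, v i = a) → (∃ i, v i = b) → (∀ i, v i = a ∨ v i = b) →
      ∀ p ∈ prs m, h v p.1 p.2 ≠ 0 → isPr p a b := by
    rintro v a b hab ⟨i, hi⟩ ⟨j, hj⟩ hall p hp hne
    obtain ⟨ti, rfl⟩ := hg i
    obtain ⟨tj, rfl⟩ := hg j
    exact two_val y (fun a b hab => hs.trans (hsep a b hab)) hpt f hmech (D / s / 6)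
      (by positivity) hcon (fun i => v (g i)) a b hab ti tj hi hj (fun t => hall _) p hp hne
  have key : ∀ i j k : Fin 3, i ≠ j → i ≠ k → j ≠ k → (∃ t0, ∀ t, g t = k → t = t0) →
      prQ (h v) (v j) (v k) < 1/3 := by
    intro i j k hij hik hjk ho
    by_contra hge
    push Not at hge
    rw [← Q_eq y hmid h hhm hhs htwo v hv i j k hij hik hjk d hd] at hge
    have uj : Function.update v i d j = v j := Function.update_of_ne hij.symm _ _
    have uk : Function.update v i d k = v k := Function.update_of_ne hik.symm _ _
    have ui : Function.update v i d i = d := by simp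
    have hv' : Function.Injective (Function.update v i d) := by
      intro a b hab
      by_cases ha : a = i <;> by_cases hb : b = i
      · rw [ha, hb]
      · subst ha; simp [Function.update_of_ne hb] at hab; exact absurd hab.symm (hd b)
      · subst hb; simp [Function.update_of_ne ha] at hab; exact absurd hab (hd a)
      · rw [Function.update_of_ne ha, Function.update_of_ne hb] at hab; exact hv hab
    have := final_bound y f hmech D s hs0 hD hsep g hg (Function.update v i d) hv' i j k hij hik
      hjk ho (by rw [ui, uj]; exact hvd j) (by rw [ui, uk]; exact hvd k)
      (by rw [uj, uk]; exact hvv k j hjk.symm) (by rw [uj, uk]; exact hge)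
    exact absurd this.2 (not_le.2 (hcon _ _ this.1))
  have k1 := key 2 1 0 (by decide) (by decide) (by decide) hone0
  have k2 := key 1 2 0 (by decide) (by decide) (by decide) hone0
  have k3 := key 0 2 1 (by decide) (by decide) (by decide) hone1
  have := Q_sum (h v) (hhm v).1 (hhm v).2.2.2 (v 2) (v 1) (v 0)
    (supp3 y hmid h hhm hhs htwo v hv 2 1 0 (by decide) (by decide) (by decide))
  linarith

theorem cand_lt (m : ℕ) (r : ℝ) (k : Fin m) (h : (k : ℕ) < m - 1) :
    multiCand m r k = EuclideanSpace.single (⟨(k : ℕ), h⟩ : Fin (m - 1)) (1 : ℝ) := by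
  simp [multiCand, h]

theorem cand_last (m : ℕ) (r : ℝ) (k : Fin m) (h : ¬ (k : ℕ) < m - 1) :
    multiCand m r k = WithLp.toLp 2 (fun _ : Fin (m - 1) => r) := by
  simp [multiCand, h]

theorem inn_lt_lt (m : ℕ) (r : ℝ) (a b : Fin m) (ha : (a : ℕ) < m - 1) (hb : (b : ℕ) < m - 1) :
    inner ℝ (multiCand m r a) (multiCand m r b) = if a = b then 1 else 0 := by
  rw [cand_lt m r a ha, cand_lt m r b hb]
  simp [EuclideanSpace.inner_single_left, Pi.single_apply, Fin.ext_iff]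

theorem inn_lt_last (m : ℕ) (r : ℝ) (a b : Fin m) (ha : (a : ℕ) < m - 1)
    (hb : ¬ (b : ℕ) < m - 1) :
    inner ℝ (multiCand m r a) (multiCand m r b) = r := by
  rw [cand_lt m r a ha, cand_last m r b hb]
  simp [EuclideanSpace.inner_single_left]

theorem inn_last_last (m : ℕ) (hm : 3 < m) (r : ℝ) (b : Fin m)
    (hb : ¬ (b : ℕ) < m - 1) :
    inner ℝ (multiCand m r b) (multiCand m r b) = ((m : ℝ) - 1) * r ^ 2 := by
  rw [cand_last m r b hb, PiLp.inner_apply]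
  simp [Nat.cast_sub (by omega : 1 ≤ m)]

theorem dist_sq_inner {E : Type*} [NormedAddCommGroup E] [InnerProductSpace ℝ E] (a b : E) :
    dist a b ^ 2 = inner ℝ a a - 2 * inner ℝ a b + inner ℝ b b := by
  rw [dist_eq_norm, norm_sub_sq_real, real_inner_self_eq_norm_sq, real_inner_self_eq_norm_sq]

theorem dist_lt_lt (m : ℕ) (r : ℝ) (a b : Fin m) (ha : (a : ℕ) < m - 1) (hb : (b : ℕ) < m - 1)
    (hab : a ≠ b) : dist (multiCand m r a) (multiCand m r b) = √2 := by
  rw [eq_comm, Real.sqrt_eq_iff_eq_sq (by norm_num) dist_nonneg, dist_sq_inner,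
    inn_lt_lt _ _ _ _ ha ha, inn_lt_lt _ _ _ _ ha hb, inn_lt_lt _ _ _ _ hb hb]
  simp [hab]; norm_num

theorem dist_last_lt (m : ℕ) (hm : 3 < m) (r : ℝ) (a b : Fin m) (ha : (a : ℕ) < m - 1)
    (hb : ¬ (b : ℕ) < m - 1) :
    dist (multiCand m r b) (multiCand m r a) = √((r - 1) ^ 2 + ((m : ℝ) - 2) * r ^ 2) := by
  have hm' : (3 : ℝ) < m := by exact_mod_cast hm
  rw [dist_comm, eq_comm, Real.sqrt_eq_iff_eq_sq (by nlinarith [sq_nonneg (r - 1), sq_nonneg r])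
    dist_nonneg, dist_sq_inner, inn_lt_lt _ _ _ _ ha ha, inn_lt_last _ _ _ _ ha hb,
    inn_last_last _ hm _ _ hb]
  simp; ring

theorem mid_exists {E : Type*} [NormedAddCommGroup E] [InnerProductSpace ℝ E] (a b : E) :
    ∃ (z : E) (ρ : ℝ), dist z a = ρ ∧ dist z b = ρ ∧
      ∀ c, 0 < inner ℝ (a - c) (b - c) → ρ < dist z c := by
  refine ⟨midpoint ℝ a b, 1/2 * dist a b, ?_, ?_, ?_⟩
  · rw [dist_midpoint_left]; simp
  · rw [dist_midpoint_right]; simp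
  · intro c hc
    refine lt_of_pow_lt_pow_left₀ 2 dist_nonneg ?_
    have e1 : midpoint ℝ a b - c = (1/2 : ℝ) • ((a - c) + (b - c)) := by
      rw [midpoint_eq_smul_add, invOf_eq_inv]; module
    have e2 : a - b = (a - c) - (b - c) := by abel
    rw [mul_pow, dist_eq_norm, dist_eq_norm, e1, e2, norm_smul, mul_pow, norm_sub_sq_real,
      norm_add_sq_real]
    norm_num
    linarith

theorem inner_pos (m : ℕ) (hm : 3 < m) (r : ℝ) (hr : 2 < r) (a b c : Fin m) (hab : a ≠ b)
    (hca : c ≠ a) (hcb : c ≠ b) :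
    0 < inner ℝ (multiCand m r a - multiCand m r c) (multiCand m r b - multiCand m r c) := by
  have hm' : (3 : ℝ) < m := by exact_mod_cast hm
  have hl : ∀ u w : Fin m, u ≠ w → ¬ (u : ℕ) < m - 1 → (w : ℕ) < m - 1 := by
    intro u w huw h
    have := u.2
    have := w.2
    have : (u : ℕ) ≠ w := fun h => huw (Fin.ext h)
    omega
  rw [inner_sub_left, inner_sub_right, inner_sub_right]
  by_cases hc : (c : ℕ) < m - 1
  · by_cases ha : (a : ℕ) < m - 1
    · by_cases hb : (b : ℕ) < m - 1
      · rw [inn_lt_lt _ _ _ _ ha hb, inn_lt_lt _ _ _ _ ha hc, inn_lt_lt _ _ _ _ hc hb,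
          inn_lt_lt _ _ _ _ hc hc]
        simp [hab, hcb, hca.symm]
      · rw [inn_lt_last _ _ _ _ ha hb, inn_lt_last _ _ _ _ hc hb, inn_lt_lt _ _ _ _ ha hc,
          inn_lt_lt _ _ _ _ hc hc]
        simp [hca.symm]
    · have hb := hl a b hab ha
      rw [real_inner_comm, inn_lt_last _ _ _ _ hb ha,
        real_inner_comm (multiCand m r c) (multiCand m r a), inn_lt_last _ _ _ _ hc ha,
        inn_lt_lt _ _ _ _ hc hb, inn_lt_lt _ _ _ _ hc hc]
      simp [hcb]
  · have ha := hl c a hca hc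
    have hb := hl c b hcb hc
    rw [inn_lt_lt _ _ _ _ ha hb, inn_lt_last _ _ _ _ ha hc,
      real_inner_comm (multiCand m r b) (multiCand m r c), inn_lt_last _ _ _ _ hb hc,
      inn_last_last _ hm _ _ hc]
    simp only [hab, if_false]
    nlinarith [mul_pos (show (0:ℝ) < m - 3 by linarith) (show (0:ℝ) < r^2 by positivity)]


/-- On the instance `multiCand m r` with `m > 3` and `r > 2` (where
`d_min = √2`, `d_max = √((r-1)² + (m-2)r²)` and `σ = d_max / d_min`), every
strategy-proof randomized two-winner scv mechanism with `n ≥ 3` voters has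
distortion at least `σ / 6`. -/
theorem stmt8 (m : ℕ) (hm : 3 < m) (r : ℝ) (hr : 2 < r) (n : ℕ) (hn : 3 ≤ n)
    (f : (Fin n → Fin m) → Fin m → Fin m → ℝ)
    (hmech : IsRandMech f) (hsp : RandSP (multiCand m r) f) :
    ∃ (a : Fin n → Fin m) (x : Fin n → EuclideanSpace ℝ (Fin (m - 1))),
      Consistent (multiCand m r) a x ∧
      (Real.sqrt ((r - 1) ^ 2 + ((m : ℝ) - 2) * r ^ 2) / Real.sqrt 2) / 6 ≤
        expSC (multiCand m r) f a x / OPT (multiCand m r) x := by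
  have hm' : (3 : ℝ) < m := by exact_mod_cast hm
  have hD2 : 2 ≤ (r - 1) ^ 2 + ((m : ℝ) - 2) * r ^ 2 := by
    nlinarith [mul_pos (show (0:ℝ) < m - 3 by linarith) (show (0:ℝ) < r^2 by positivity)]
  have hs2 : √2 ≤ √((r - 1) ^ 2 + ((m : ℝ) - 2) * r ^ 2) := Real.sqrt_le_sqrt hD2
  have hs1 : (1 : ℝ) ≤ √2 := Real.one_le_sqrt.2 (by norm_num)
  have hl : ∀ u w : Fin m, u ≠ w → ¬ (u : ℕ) < m - 1 → (w : ℕ) < m - 1 := by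
    intro u w huw h
    have := u.2
    have := w.2
    have : (u : ℕ) ≠ w := fun h => huw (Fin.ext h)
    omega
  refine abstract_main (multiCand m r) f hmech hsp hn _ _ hs1 (by linarith) ?_ ?_ ?_
    (fun t => ⟨t.val, by omega⟩) ?_ ⟨m - 1, by omega⟩ ?_ ?_ ?_
  · intro a b hab
    by_cases ha : (a : ℕ) < m - 1
    · by_cases hb : (b : ℕ) < m - 1
      · exact (dist_lt_lt m r a b ha hb hab).ge
      · rw [dist_comm, dist_last_lt m hm r a b ha hb]; exact hs2
    · rw [dist_last_lt m hm r b a (hl a b hab ha) ha]; exact hs2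
  · intro a δ hδ
    refine ⟨multiCand m r a + EuclideanSpace.single (⟨0, by omega⟩ : Fin (m - 1)) δ, ?_⟩
    rw [dist_eq_norm, add_sub_cancel_left, EuclideanSpace.norm_single, Real.norm_of_nonneg hδ.le]
  · intro a b hab
    obtain ⟨z, ρ, h1, h2, h3⟩ := mid_exists (multiCand m r a) (multiCand m r b)
    exact ⟨z, ρ, h1, h2, fun c hca hcb => h3 _ (inner_pos m hm r hr a b c hab hca hcb)⟩
  · intro a b hab
    simpa [Fin.ext_iff] using hab
  · intro t ht
    have := congrArg Fin.val ht
    simp only at this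
    omega
  · intro t
    exact dist_last_lt m hm r _ _ (by simp only; omega) (by simp)
  · intro i j hij
    exact dist_lt_lt m r _ _ (by simp only; omega) (by simp only; omega)
      (by simpa [Fin.ext_iff] using hij)
end

section
/- Place four candidates in ℝ³ at y_1 = (1,0,0), y_2 = (0,1,0), y_3 = (0,0,1), y_4 = (r,r,r) with r > 2, and let n = 4. Then no anonymous deterministic strategy-proof two-winner scv mechanism for these candidates has finite distortion: for every such mechanism f there exist an action profile a and a location profile x consistent with a such that OPT(x) = 0 while SC(f(a), x) > 0. -/
open Finset

/-- Strategy-proofness of a deterministic two-winner mechanism. -/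
def DetSP {α : Type*} [PseudoMetricSpace α] {m n : ℕ}
    (y : Fin m → α) (f : (Fin n → Fin m) → Fin m × Fin m) : Prop :=
  ∀ (i : Fin n) (xi : α) (a : Fin n → Fin m) (astar ai' : Fin m),
    (∀ k, dist xi (y astar) ≤ dist xi (y k)) →
    pairCost y (f (Function.update a i astar)).1 (f (Function.update a i astar)).2 xi ≤
      pairCost y (f (Function.update a i ai')).1 (f (Function.update a i ai')).2 xi

/-- Number of votes received by candidate `k` under action profile `a`. -/
def votes {m n : ℕ} (a : Fin n → Fin m) (k : Fin m) : ℕ :=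
  (univ.filter fun i => a i = k).card


/-- Combinatorial core. -/
lemma core_aux (G : Fin 4 → Fin 4 → Fin 4 → Fin 4 → Finset (Fin 4))
    (h12 : ∀ p q s t, G p q s t = G q p s t)
    (h23 : ∀ p q s t, G p q s t = G p s q t)
    (h34 : ∀ p q s t, G p q s t = G p q t s)
    (hsp : ∀ p q s k k', k ∈ G p q s k ∨ G p q s k = G p q s k')
    (h31 : ∀ p s, p ≠ s → G p p p s = {p, s})
    (p q s t : Fin 4) (hpq : p ≠ q) (hps : p ≠ s) (hpt : p ≠ t) (hqs : q ≠ s)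
    (hqt : q ≠ t) (hst : s ≠ t) (hcard : (G p p s t).card = 2)
    (h : G p q s t = {p, q}) : False := by
  have e1 : G p p s q = {p, q} := by
    rcases hsp p q s t p with h1 | h1
    · rw [h] at h1; simp at h1; grind
    · rw [← h, h1, h34 p q s p, h23 p q p s, h34 p p q s]
  have e2 : G p p t q = {p, q} := by
    have h' : G p q t s = {p, q} := by rw [← h34]; exact h
    rcases hsp p q t s p with h1 | h1
    · rw [h'] at h1; simp at h1; grind
    · rw [← h', h1, h34 p q t p, h23 p q p t, h34 p p q t]
  have m1 : t ∈ G p p s t := by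
    rcases hsp p p s t p with h1 | h1
    · exact h1
    · rcases hsp p p s t q with h2 | h2
      · exact h2
      · have : G p p s p = {p, s} := by rw [h34]; exact h31 p s hps
        have h3 : ({p, s} : Finset (Fin 4)) = {p, q} := by rw [← this, ← h1, h2, e1]
        have : s ∈ ({p, q} : Finset (Fin 4)) := by rw [← h3]; simp
        simp at this; grind
  have m2 : s ∈ G p p s t := by
    rw [h34]
    rcases hsp p p t s p with h1 | h1
    · exact h1
    · rcases hsp p p t s q with h2 | h2
      · exact h2
      · have : G p p t p = {p, t} := by rw [h34]; exact h31 p t hpt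
        have h3 : ({p, t} : Finset (Fin 4)) = {p, q} := by rw [← this, ← h1, h2, e2]
        have : t ∈ ({p, q} : Finset (Fin 4)) := by rw [← h3]; simp
        simp at this; grind
  have m3 : p ∈ G p p s t := by
    have r1 : G p p s t = G p s t p := by rw [h23, h34]
    have r2 : G p q s t = G p s t q := by rw [h23, h34]
    rw [r1]
    rcases hsp p s t p q with h1 | h1
    · exact h1
    · rw [h1, ← r2, h]; simp
  have hsub : ({p, s, t} : Finset (Fin 4)) ⊆ G p p s t := by
    intro z hz; simp at hz; rcases hz with rfl | rfl | rfl <;> assumption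
  have h3 : ({p, s, t} : Finset (Fin 4)).card = 3 := by
    rw [Finset.card_eq_three]; exact ⟨p, s, t, hps, hpt, hst, rfl⟩
  have := Finset.card_le_card hsub
  omega

/-- The midpoint of two candidates is strictly closer to them than to any other one. -/
lemma geom_aux (r : ℝ) (hr : 2 < r)
    (y : Fin 4 → EuclideanSpace ℝ (Fin 3))
    (hy : y = ![EuclideanSpace.single (0 : Fin 3) (1 : ℝ),
      EuclideanSpace.single (1 : Fin 3) (1 : ℝ),
      EuclideanSpace.single (2 : Fin 3) (1 : ℝ),
      (WithLp.equiv 2 (Fin 3 → ℝ)).symm (fun _ => r)])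
    (k q j : Fin 4) (hkq : k ≠ q) (hjk : j ≠ k) (hjq : j ≠ q) :
    dist (midpoint ℝ (y k) (y q)) (y k) < dist (midpoint ℝ (y k) (y q)) (y j) := by
  rw [EuclideanSpace.dist_eq, EuclideanSpace.dist_eq]
  apply Real.sqrt_lt_sqrt (by positivity)
  simp only [Real.dist_eq, sq_abs, midpoint_eq_smul_add, Fin.sum_univ_three]
  subst hy
  fin_cases k <;> fin_cases q <;> first | (exact absurd rfl hkq) | (
    fin_cases j <;> first | (exact absurd rfl hjk) | (exact absurd rfl hjq) | (
      simp
      try nlinarith))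

lemma inj_aux (r : ℝ) (hr : 2 < r)
    (y : Fin 4 → EuclideanSpace ℝ (Fin 3))
    (hy : y = ![EuclideanSpace.single (0 : Fin 3) (1 : ℝ),
      EuclideanSpace.single (1 : Fin 3) (1 : ℝ),
      EuclideanSpace.single (2 : Fin 3) (1 : ℝ),
      (WithLp.equiv 2 (Fin 3 → ℝ)).symm (fun _ => r)]) : Function.Injective y := by
  intro k q h
  by_contra hkq
  obtain ⟨j, hjk, hjq⟩ : ∃ j : Fin 4, j ≠ k ∧ j ≠ q := by
    clear h hkq
    revert k q; decide
  have h1 := geom_aux r hr y hy k j q (Ne.symm hjk) (Ne.symm hkq) (Ne.symm hjq)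
  rw [h] at h1
  exact lt_irrefl _ h1

lemma sp_aux (y : Fin 4 → EuclideanSpace ℝ (Fin 3)) (hinj : Function.Injective y)
    (hg : ∀ k q j : Fin 4, k ≠ q → j ≠ k → j ≠ q →
      dist (midpoint ℝ (y k) (y q)) (y k) < dist (midpoint ℝ (y k) (y q)) (y j))
    (k : Fin 4) (P Q : Fin 4 × Fin 4) (hP : P.1 ≠ P.2) (hQ : Q.1 ≠ Q.2)
    (h : ∀ x, (∀ j, dist x (y k) ≤ dist x (y j)) → pairCost y P.1 P.2 x ≤ pairCost y Q.1 Q.2 x) :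
    k ∈ ({P.1, P.2} : Finset (Fin 4)) ∨ ({P.1, P.2} : Finset (Fin 4)) = {Q.1, Q.2} := by
  by_contra! hcon
  obtain ⟨hk, hne⟩ := hcon
  simp only [mem_insert, mem_singleton, not_or] at hk
  have key : ∀ q, q ∈ ({Q.1, Q.2} : Finset (Fin 4)) → q ∈ ({P.1, P.2} : Finset (Fin 4)) := by
    intro q hq
    by_contra hqP
    simp only [mem_insert, mem_singleton, not_or] at hq hqP
    obtain ⟨x, hx, hlt⟩ : ∃ x, (∀ j, dist x (y k) ≤ dist x (y j)) ∧
        ∀ j, j ≠ k → j ≠ q → dist x (y q) < dist x (y j) := by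
      by_cases hkq : k = q
      · subst hkq
        refine ⟨y k, fun j => by simp, fun j hj _ => ?_⟩
        simp only [dist_self]
        exact dist_pos.2 (fun e => hj (hinj e).symm)
      · have he : dist (midpoint ℝ (y k) (y q)) (y q) = dist (midpoint ℝ (y k) (y q)) (y k) := by
          rw [dist_midpoint_left, dist_midpoint_right]
        refine ⟨midpoint ℝ (y k) (y q), fun j => ?_, fun j hj hj' => ?_⟩
        · by_cases hjk : j = k
          · rw [hjk]
          · by_cases hjq : j = q
            · rw [hjq, he]
            · exact (hg k q j hkq hjk hjq).le
        · rw [he]; exact hg k q j hkq hj hj'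
    have h1 := h x hx
    have hQ' : pairCost y Q.1 Q.2 x ≤ dist x (y q) := by
      unfold pairCost
      rcases hq with rfl | rfl
      · exact min_le_left _ _
      · exact min_le_right _ _
    have hP' : dist x (y q) < pairCost y P.1 P.2 x :=
      lt_min (hlt _ (Ne.symm hk.1) (Ne.symm hqP.1)) (hlt _ (Ne.symm hk.2) (Ne.symm hqP.2))
    linarith
  apply hne
  symm
  apply Finset.eq_of_subset_of_card_le key
  rw [Finset.card_pair hP, Finset.card_pair hQ]

lemma opt_aux (y : Fin 4 → EuclideanSpace ℝ (Fin 3)) (a : Fin 4 → Fin 4) (k l : Fin 4)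
    (hkl : k ≠ l) (h : ∀ i, a i = k ∨ a i = l) : OPT y (fun i => y (a i)) = 0 := by
  have nn : ∀ c ∈ {c : ℝ | ∃ k l : Fin 4, k ≠ l ∧ c = socialCost y k l (fun i => y (a i))},
      0 ≤ c := by
    rintro c ⟨k, l, -, rfl⟩
    exact Finset.sum_nonneg fun i _ => le_min dist_nonneg dist_nonneg
  apply le_antisymm
  · apply csInf_le ⟨0, nn⟩
    refine ⟨k, l, hkl, ?_⟩
    symm
    apply Finset.sum_eq_zero
    intro i _
    unfold pairCost
    rcases h i with e | e <;> simp [e]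
  · exact Real.sInf_nonneg nn

lemma votes_aux (p q s t k : Fin 4) : votes ![p, q, s, t] k =
    (if p = k then 1 else 0) + (if q = k then 1 else 0) + (if s = k then 1 else 0) +
      (if t = k then 1 else 0) := by
  unfold votes
  rw [Finset.card_filter, Fin.sum_univ_four]
  rfl

/-- Four candidates in `ℝ³` at `e₁, e₂, e₃, (r,r,r)` (`r > 2`) with `n = 4`
voters: no anonymous deterministic strategy-proof two-winner scv mechanism has
finite distortion — there is a consistent instance with zero optimal cost on
which the mechanism incurs positive social cost. -/
theorem stmt13 (r : ℝ) (hr : 2 < r)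
    (y : Fin 4 → EuclideanSpace ℝ (Fin 3))
    (hy : y = ![EuclideanSpace.single (0 : Fin 3) (1 : ℝ),
      EuclideanSpace.single (1 : Fin 3) (1 : ℝ),
      EuclideanSpace.single (2 : Fin 3) (1 : ℝ),
      (WithLp.equiv 2 (Fin 3 → ℝ)).symm (fun _ => r)])
    (f : (Fin 4 → Fin 4) → Fin 4 × Fin 4)
    (hvalid : ∀ a, (f a).1 ≠ (f a).2)
    (hanon : ∀ a a' : Fin 4 → Fin 4, (∀ k, votes a k = votes a' k) → f a = f a')
    (hsp : DetSP y f) :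
    ∃ (a : Fin 4 → Fin 4) (x : Fin 4 → EuclideanSpace ℝ (Fin 3)),
      Consistent y a x ∧ OPT y x = 0 ∧
        0 < socialCost y (f a).1 (f a).2 x := by
  by_contra! hcon
  have hinj := inj_aux r hr y hy
  have hg := geom_aux r hr y hy
  have hfin : ∀ (a : Fin 4 → Fin 4) (k l : Fin 4), k ≠ l → (∀ i, a i = k ∨ a i = l) →
      ∀ i, a i ∈ ({(f a).1, (f a).2} : Finset (Fin 4)) := by
    intro a k l hkl h i
    have h1 := hcon a (fun i => y (a i)) (fun i j => by simp) (opt_aux y a k l hkl h)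
    by_contra hi
    simp only [mem_insert, mem_singleton, not_or] at hi
    apply absurd h1
    rw [not_le]
    apply Finset.sum_pos' (fun i _ => le_min dist_nonneg dist_nonneg)
    exact ⟨i, mem_univ _, lt_min (dist_pos.2 fun e => hi.1 (hinj e))
      (dist_pos.2 fun e => hi.2 (hinj e))⟩
  let G : Fin 4 → Fin 4 → Fin 4 → Fin 4 → Finset (Fin 4) :=
    fun p q s t => {(f ![p, q, s, t]).1, (f ![p, q, s, t]).2}
  have hcard : ∀ p q s t, (G p q s t).card = 2 := fun p q s t => Finset.card_pair (hvalid _)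
  have h12 : ∀ p q s t, G p q s t = G q p s t := by
    intro p q s t
    have := hanon ![p, q, s, t] ![q, p, s, t] (fun k => by simp only [votes_aux]; omega)
    simp only [G, this]
  have h23 : ∀ p q s t, G p q s t = G p s q t := by
    intro p q s t
    have := hanon ![p, q, s, t] ![p, s, q, t] (fun k => by simp only [votes_aux]; omega)
    simp only [G, this]
  have h34 : ∀ p q s t, G p q s t = G p q t s := by
    intro p q s t
    have := hanon ![p, q, s, t] ![p, q, t, s] (fun k => by simp only [votes_aux]; omega)
    simp only [G, this]
  have hsp' : ∀ p q s k k', k ∈ G p q s k ∨ G p q s k = G p q s k' := by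
    intro p q s k k'
    apply sp_aux y hinj hg k _ _ (hvalid _) (hvalid _)
    intro x hx
    have hu : ∀ z, Function.update ![p, q, s, k] 3 z = ![p, q, s, z] := by
      intro z; funext i; fin_cases i <;> rfl
    have := hsp 3 x ![p, q, s, k] k k' hx
    rwa [hu, hu] at this
  have h31 : ∀ p s, p ≠ s → G p p p s = {p, s} := by
    intro p s hps
    symm
    apply Finset.eq_of_subset_of_card_le
    · have h1 := hfin ![p, p, p, s] p s hps (fun i => by fin_cases i <;> simp)
      intro z hz
      simp only [mem_insert, mem_singleton] at hz
      rcases hz with rfl | rfl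
      · exact h1 0
      · exact h1 3
    · rw [hcard, Finset.card_pair hps]
  have hno : ∀ p q s t : Fin 4, p ≠ q → p ≠ s → p ≠ t → q ≠ s → q ≠ t → s ≠ t →
      G p q s t ≠ {p, q} := fun p q s t a b c d e g h =>
    core_aux G h12 h23 h34 hsp' h31 p q s t a b c d e g (hcard p p s t) h
  have hall : G 0 1 2 3 = {0, 1} ∨ G 0 1 2 3 = {0, 2} ∨ G 0 1 2 3 = {0, 3} ∨
      G 0 1 2 3 = {1, 2} ∨ G 0 1 2 3 = {1, 3} ∨ G 0 1 2 3 = {2, 3} := by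
    have := hcard 0 1 2 3
    generalize G 0 1 2 3 = S at this
    revert S; decide
  rcases hall with h | h | h | h | h | h
  · exact hno 0 1 2 3 (by decide) (by decide) (by decide) (by decide) (by decide) (by decide) h
  · exact hno 0 2 1 3 (by decide) (by decide) (by decide) (by decide) (by decide) (by decide)
      (by rw [h23]; exact h)
  · exact hno 0 3 1 2 (by decide) (by decide) (by decide) (by decide) (by decide) (by decide)
      (by rw [h23, h34]; exact h)
  · exact hno 1 2 0 3 (by decide) (by decide) (by decide) (by decide) (by decide) (by decide)
      (by rw [h23, h12]; exact h)
  · exact hno 1 3 0 2 (by decide) (by decide) (by decide) (by decide) (by decide) (by decide)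
      (by rw [h23, h12, h34]; exact h)
  · exact hno 2 3 0 1 (by decide) (by decide) (by decide) (by decide) (by decide) (by decide)
      (by rw [h23, h12, h34, h23]; exact h)
end
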